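/- Let n ≥ 1, 1 ≤ p < ∞, and let f : ℝⁿ → ℝ be smooth with compact support. Then lim_{t → 0⁺} t^{-p/2} ∫_{ℝⁿ} ∫_{ℝⁿ} p_t(x,y) |f(y) − f(x)|^p dy dx = (2Γ(p)/Γ(p/2)) ∫_{ℝⁿ} ‖∇f(x)‖^p dx. -/

import Mathlib

open Real MeasureTheory Filter Topology

/-!
Substituting `y = x + √t • z` turns the left-hand side into
`∫ x, ∫ z, p₁(0, z) |(f (x + √t • z) - f x) / √t| ^ p`. The difference quotient tends to
`fderiv ℝ f x z` for almost every `x`, by Rademacher's theorem, and its `p`-th power is bounded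
uniformly in `t ≤ 1` by a polynomial in `‖z‖`; it vanishes unless `‖x‖ ≤ R + ‖z‖`, so the Gaussian
decay in `z` also pays for decay in `x`, and dominated convergence applies. In the limit, the
integral over `z` is an absolute moment of a linear form, which depends only on the one-dimensional
marginal of the heat kernel; Legendre's duplication formula gives its value.
-/

section HeatKernel

variable {E : Type*} [NormedAddCommGroup E] [InnerProductSpace ℝ E]

/-- The Gauss–Weierstrass kernel `p_t(x, y)` of the heat equation `∂ₜu = Δu`. The dimension is
`Module.finrank ℝ E`, and the values are only meaningful for `0 < t`. -/
noncomputable def heatKernel (t : ℝ) (x y : E) : ℝ :=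
  (4 * π * t) ^ (-(Module.finrank ℝ E : ℝ) / 2) * exp (-‖x - y‖ ^ 2 / (4 * t))

lemma heatKernel_nonneg {t : ℝ} (ht : 0 ≤ t) (x y : E) : 0 ≤ heatKernel t x y := by
  unfold heatKernel
  positivity

lemma continuous_heatKernel (t : ℝ) (x : E) : Continuous (heatKernel t x) := by
  unfold heatKernel
  fun_prop

lemma heatKernel_sq_add_smul {r : ℝ} (hr : 0 < r) (x z : E) :
    heatKernel (r ^ 2) x (x + r • z) = (r ^ Module.finrank ℝ E)⁻¹ * heatKernel 1 0 z := by
  have normalization : (r ^ 2) ^ (-(Module.finrank ℝ E : ℝ) / 2) =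
      (r ^ Module.finrank ℝ E)⁻¹ := by
    rw [← rpow_natCast, ← rpow_natCast, ← rpow_mul hr.le, ← rpow_neg hr.le]
    congr 1
    push_cast
    ring
  have exponent : -‖x - (x + r • z)‖ ^ 2 / (4 * r ^ 2) = -‖0 - z‖ ^ 2 / (4 * 1) := by
    rw [sub_add_cancel_left, norm_neg, norm_smul, norm_of_nonneg hr.le, zero_sub, norm_neg]
    field_simp
  rw [heatKernel, heatKernel, exponent, mul_rpow (by positivity) (by positivity), normalization]
  ring_nf

lemma heatKernel_le_one_add_norm_rpow {t q : ℝ} (ht : 0 < t) (hq : 0 ≤ q) (x y : E) :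
    heatKernel t x y ≤ (4 * π * t) ^ (-(Module.finrank ℝ E : ℝ) / 2) * exp (t * q ^ 2) *
      (1 + ‖x - y‖) ^ (-q) := by
  set s := ‖x - y‖
  have rpow_le_exp : (1 + s) ^ q ≤ exp (q * s) := by
    rw [mul_comm q s, exp_mul]
    exact rpow_le_rpow (by positivity) (by linarith [add_one_le_exp s]) hq
  have complete_square : -s ^ 2 / (4 * t) + q * s ≤ t * q ^ 2 := by
    rw [← sub_nonneg, show t * q ^ 2 - (-s ^ 2 / (4 * t) + q * s) = (s - 2 * t * q) ^ 2 / (4 * t) by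
      field_simp; ring]
    positivity
  have gaussian_le : exp (-s ^ 2 / (4 * t)) ≤ exp (t * q ^ 2) * (1 + s) ^ (-q) := by
    rw [rpow_neg (by positivity), ← div_eq_mul_inv, le_div_iff₀ (by positivity)]
    calc exp (-s ^ 2 / (4 * t)) * (1 + s) ^ q
        ≤ exp (-s ^ 2 / (4 * t)) * exp (q * s) := by gcongr
      _ = exp (-s ^ 2 / (4 * t) + q * s) := (exp_add _ _).symm
      _ ≤ exp (t * q ^ 2) := exp_le_exp.mpr complete_square
  rw [heatKernel, mul_assoc _ (exp _)]
  exact mul_le_mul_of_nonneg_left gaussian_le (by positivity)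

lemma heatKernel_eq_prod_repr {ι : Type*} [Fintype ι] (b : OrthonormalBasis ι ℝ E) {t : ℝ}
    (ht : 0 ≤ t) (x y : E) :
    heatKernel t x y = ∏ i, heatKernel t (b.repr x i) (b.repr y i) := by
  have norm_sq : ‖x - y‖ ^ 2 = ∑ i, ‖b.repr x i - b.repr y i‖ ^ 2 := by
    rw [← b.repr.norm_map, EuclideanSpace.norm_sq_eq]
    simp
  simp only [heatKernel, Finset.prod_mul_distrib, ← exp_sum, Finset.prod_const, Finset.card_univ,
    Module.finrank_self, Module.finrank_eq_card_basis b.toBasis, norm_sq, ← Finset.sum_div,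
    Finset.sum_neg_distrib]
  rw [← rpow_mul_natCast (by positivity)]
  congr 2
  push_cast
  ring

end HeatKernel

lemma exists_orthonormalBasis_apply_eq {𝕜 E : Type*} [RCLike 𝕜] [NormedAddCommGroup E]
    [InnerProductSpace 𝕜 E] [FiniteDimensional 𝕜 E] {u : E} (hu : ‖u‖ = 1) :
    ∃ (s : Finset E) (b : OrthonormalBasis s 𝕜 E) (i : s), b i = u := by
  have orthonormal_singleton : Orthonormal 𝕜 ((↑) : ({u} : Set E) → E) :=
    orthonormal_subsingleton_iff.mpr fun v => by rw [v.2, hu]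
  obtain ⟨s, b, hus, hb⟩ := orthonormal_singleton.exists_orthonormalBasis_extension
  exact ⟨s, b, ⟨u, hus rfl⟩, by rw [hb]⟩

section GaussianMoments

lemma integral_heatKernel_mul_abs_rpow_real {t p : ℝ} (ht : 0 < t) (hp : -1 < p) :
    ∫ s : ℝ, heatKernel t 0 s * |s| ^ p = (4 * t) ^ (p / 2) * Gamma ((p + 1) / 2) / √π := by
  have integrand (s : ℝ) : heatKernel t 0 s * |s| ^ p =
      (4 * π * t) ^ (-1 / 2 : ℝ) * (|s| ^ p * exp (-(4 * t)⁻¹ * |s| ^ (2 : ℝ))) := by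
    rw [heatKernel, Module.finrank_self, zero_sub, norm_neg, norm_eq_abs, rpow_two]
    push_cast
    ring_nf
  have scaling : (4 * π * t) ^ (-1 / 2 : ℝ) * ((4 * t)⁻¹) ^ (-(p + 1) / 2) =
      (4 * t) ^ (p / 2) / √π := by
    have h4t : 0 < 4 * t := by positivity
    rw [show 4 * π * t = 4 * t * π by ring, mul_rpow h4t.le pi_pos.le, inv_rpow h4t.le,
      ← rpow_neg h4t.le, mul_right_comm, ← rpow_add h4t, sqrt_eq_rpow, neg_div 2 1,
      rpow_neg pi_pos.le, ← div_eq_mul_inv]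
    ring_nf
  simp_rw [integrand]
  rw [integral_const_mul,
    integral_comp_abs (f := fun s : ℝ => s ^ p * exp (-(4 * t)⁻¹ * s ^ (2 : ℝ))),
    integral_rpow_mul_exp_neg_mul_rpow two_pos hp (by positivity)]
  linear_combination Gamma ((p + 1) / 2) * scaling

lemma integral_heatKernel_real {t : ℝ} (ht : 0 < t) : ∫ s : ℝ, heatKernel t 0 s = 1 := by
  simpa [← one_div, Gamma_one_half_eq, (sqrt_pos.mpr pi_pos).ne'] using
    integral_heatKernel_mul_abs_rpow_real ht (p := 0) (by norm_num)

lemma two_rpow_mul_Gamma_div_sqrt_pi {p : ℝ} (hp : 0 < p) :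
    2 ^ p * Gamma ((p + 1) / 2) / √π = 2 * Gamma p / Gamma (p / 2) := by
  have hGamma : Gamma (p / 2) ≠ 0 := (Gamma_pos_of_pos (by positivity)).ne'
  have hpi : √π ≠ 0 := (sqrt_pos.mpr pi_pos).ne'
  have duplication : Gamma (p / 2) * Gamma ((p + 1) / 2) = Gamma p * 2 ^ (1 - p) * √π := by
    convert Gamma_mul_Gamma_add_half (p / 2) using 3 <;> ring_nf
  have two_rpow : (2 : ℝ) ^ p * 2 ^ (1 - p) = 2 := by
    rw [← rpow_add two_pos, add_sub_cancel, rpow_one]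
  rw [div_eq_div_iff hpi hGamma]
  linear_combination 2 ^ p * duplication + Gamma p * √π * two_rpow

lemma integral_heatKernel_mul_abs_rpow_real_eq_Gamma {t p : ℝ} (ht : 0 < t) (hp : 0 < p) :
    ∫ s : ℝ, heatKernel t 0 s * |s| ^ p = 2 * Gamma p / Gamma (p / 2) * t ^ (p / 2) := by
  have four_rpow : (4 : ℝ) ^ (p / 2) = 2 ^ p := by
    rw [show (4 : ℝ) = 2 ^ (2 : ℝ) by norm_num, ← rpow_mul two_pos.le,
      mul_div_cancel₀ _ two_ne_zero]
  rw [integral_heatKernel_mul_abs_rpow_real ht (by linarith), mul_rpow four_pos.le ht.le, four_rpow,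
    ← two_rpow_mul_Gamma_div_sqrt_pi hp]
  ring

variable {E : Type*} [NormedAddCommGroup E] [InnerProductSpace ℝ E] [FiniteDimensional ℝ E]
  [MeasurableSpace E] [BorelSpace E]

lemma integral_heatKernel_mul_eq_heatKernel_one {t : ℝ} (ht : 0 < t) (x : E) (g : E → ℝ) :
    ∫ y, heatKernel t x y * g y = ∫ z, heatKernel 1 0 z * g (x + √t • z) := by
  have hr : 0 < √t := sqrt_pos.mpr ht
  have hrn : 0 < √t ^ Module.finrank ℝ E := by positivity
  have kernel (z : E) :
      heatKernel 1 0 z = √t ^ Module.finrank ℝ E * heatKernel t x (x + √t • z) := by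
    have := heatKernel_sq_add_smul hr x z
    rw [sq_sqrt ht.le] at this
    rw [this, mul_inv_cancel_left₀ hrn.ne']
  simp_rw [kernel, mul_assoc]
  rw [integral_const_mul,
    Measure.integral_comp_smul volume (fun w => heatKernel t x (x + w) * g (x + w)),
    integral_add_left_eq_self (fun y => heatKernel t x y * g y), abs_of_pos (inv_pos.mpr hrn),
    smul_eq_mul, mul_inv_cancel_left₀ hrn.ne']

lemma integral_prod_comp_repr {ι 𝕜 : Type*} [Fintype ι] [RCLike 𝕜] (b : OrthonormalBasis ι ℝ E)
    (φ : ι → ℝ → 𝕜) :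
    ∫ z, ∏ i, φ i (b.repr z i) = ∏ i, ∫ s, φ i s := by
  rw [← integral_fintype_prod_volume_eq_prod]
  exact ((PiLp.volume_preserving_ofLp ι).comp b.measurePreserving_repr).integral_comp
    ((MeasurableEquiv.toLp 2 (ι → ℝ)).symm.measurableEmbedding.comp
      b.repr.toHomeomorph.measurableEmbedding) fun w => ∏ i, φ i (w i)

lemma integral_heatKernel_mul_comp_inner {t : ℝ} (ht : 0 < t) {u : E} (hu : ‖u‖ = 1)
    (g : ℝ → ℝ) :
    ∫ z, heatKernel t 0 z * g (inner ℝ u z) = ∫ s, heatKernel t 0 s * g s := by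
  classical
  obtain ⟨ι, b, k, rfl⟩ := exists_orthonormalBasis_apply_eq (𝕜 := ℝ) hu
  calc ∫ z, heatKernel t 0 z * g (inner ℝ (b k) z)
      = ∫ z, ∏ i, heatKernel t 0 (b.repr z i) * if i = k then g (b.repr z i) else 1 := by
        congr with z
        rw [heatKernel_eq_prod_repr b ht.le, Finset.prod_mul_distrib, ← b.repr_apply_apply]
        simp
    _ = ∏ i, ∫ s, heatKernel t 0 s * if i = k then g s else 1 :=
        integral_prod_comp_repr b fun i s => heatKernel t 0 s * if i = k then g s else 1
    _ = ∏ i, if i = k then ∫ s, heatKernel t 0 s * g s else 1 := by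
        congr with i
        split_ifs
        · rfl
        · simpa using integral_heatKernel_real ht
    _ = ∫ s, heatKernel t 0 s * g s := by simp

lemma integral_heatKernel_mul_abs_rpow {t p : ℝ} (ht : 0 < t) (hp : 0 < p) (l : E →L[ℝ] ℝ) :
    ∫ z, heatKernel t 0 z * |l z| ^ p = 2 * Gamma p / Gamma (p / 2) * t ^ (p / 2) * ‖l‖ ^ p := by
  rcases eq_or_ne l 0 with rfl | hl
  · simp [zero_rpow hp.ne']
  have hl_pos : 0 < ‖l‖ := norm_pos_iff.mpr hl
  set v := (InnerProductSpace.toDual ℝ E).symm l with hv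
  have norm_unit : ‖‖l‖⁻¹ • v‖ = 1 := by
    rw [norm_smul, norm_inv, norm_norm, LinearIsometryEquiv.norm_map, inv_mul_cancel₀ hl_pos.ne']
  have apply_eq (z : E) : l z = ‖l‖ * inner ℝ (‖l‖⁻¹ • v) z := by
    rw [real_inner_smul_left, hv, InnerProductSpace.toDual_symm_apply,
      mul_inv_cancel_left₀ hl_pos.ne']
  calc ∫ z, heatKernel t 0 z * |l z| ^ p
      = ∫ z, heatKernel t 0 z * |inner ℝ (‖l‖⁻¹ • v) z| ^ p * ‖l‖ ^ p := by
        simp_rw [apply_eq, abs_mul, abs_norm, mul_rpow hl_pos.le (abs_nonneg _)]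
        simp only [mul_assoc, mul_comm (‖l‖ ^ p)]
    _ = (∫ s : ℝ, heatKernel t 0 s * |s| ^ p) * ‖l‖ ^ p := by
        rw [integral_mul_const, integral_heatKernel_mul_comp_inner ht norm_unit (|·| ^ p)]
    _ = 2 * Gamma p / Gamma (p / 2) * t ^ (p / 2) * ‖l‖ ^ p := by
        rw [integral_heatKernel_mul_abs_rpow_real_eq_Gamma ht hp]

end GaussianMoments

section DifferenceQuotient

variable {E : Type*} [NormedAddCommGroup E]

lemma norm_le_add_norm_of_apply_add_ne {F : Type*} [Zero F] {f : E → F} {R : ℝ}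
    (hR : Function.support f ⊆ Metric.closedBall 0 R) {x w : E} (hne : f (x + w) ≠ f x) :
    ‖x‖ ≤ R + ‖w‖ := by
  by_cases hx : f x = 0
  · have : ‖x + w‖ ≤ R := mem_closedBall_zero_iff.mp (hR (by rwa [hx] at hne))
    linarith [norm_le_add_norm_add x w]
  · have : ‖x‖ ≤ R := mem_closedBall_zero_iff.mp (hR hx)
    linarith [norm_nonneg w]

variable [NormedSpace ℝ E] {f : E → ℝ} {L : NNReal}

lemma abs_inv_mul_apply_add_smul_sub_le (hL : LipschitzWith L f) {r : ℝ} (hr : 0 < r) (x z : E) :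
    |r⁻¹ * (f (x + r • z) - f x)| ≤ L * ‖z‖ := by
  have hdist : |f (x + r • z) - f x| ≤ L * (r * ‖z‖) := by
    simpa [Real.dist_eq, norm_smul, abs_of_pos hr] using hL.dist_le_mul (x + r • z) x
  rw [abs_mul, abs_of_pos (inv_pos.mpr hr), inv_mul_le_iff₀ hr]
  linarith

lemma abs_inv_mul_apply_add_smul_sub_rpow_le (hL : LipschitzWith L f) {R : ℝ} (hR₀ : 0 ≤ R)
    (hR : Function.support f ⊆ Metric.closedBall 0 R) {p m : ℝ} (hp : 0 < p) (hm : 0 ≤ m)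
    {r : ℝ} (hr : 0 < r) (hr₁ : r ≤ 1) (x z : E) :
    |r⁻¹ * (f (x + r • z) - f x)| ^ p ≤
      L ^ p * (1 + R) ^ m * (1 + ‖x‖) ^ (-m) * (1 + ‖z‖) ^ (p + m) := by
  by_cases heq : f (x + r • z) = f x
  · rw [heq, sub_self, mul_zero, abs_zero, zero_rpow hp.ne']
    positivity
  have norm_x_le : 1 + ‖x‖ ≤ (1 + R) * (1 + ‖z‖) := by
    have h := norm_le_add_norm_of_apply_add_ne hR heq
    rw [norm_smul, norm_of_nonneg hr.le] at h
    nlinarith [norm_nonneg z]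
  have one_le : 1 ≤ (1 + R) ^ m * (1 + ‖z‖) ^ m * (1 + ‖x‖) ^ (-m) := by
    rw [rpow_neg (by positivity), ← div_eq_mul_inv, one_le_div (by positivity),
      ← mul_rpow (by positivity) (by positivity)]
    gcongr
  calc |r⁻¹ * (f (x + r • z) - f x)| ^ p
      ≤ (L * (1 + ‖z‖)) ^ p := by
        gcongr
        exact (abs_inv_mul_apply_add_smul_sub_le hL hr x z).trans (by gcongr; linarith)
    _ ≤ (L * (1 + ‖z‖)) ^ p * ((1 + R) ^ m * (1 + ‖z‖) ^ m * (1 + ‖x‖) ^ (-m)) :=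
        le_mul_of_one_le_right (by positivity) one_le
    _ = L ^ p * (1 + R) ^ m * (1 + ‖x‖) ^ (-m) * (1 + ‖z‖) ^ (p + m) := by
        rw [mul_rpow (by positivity) (by positivity), rpow_add (by positivity)]
        ring

end DifferenceQuotient

lemma tendsto_integral_integral_of_norm_le_mul {α β ι G : Type*} [MeasurableSpace α]
    [MeasurableSpace β] [NormedAddCommGroup G] [NormedSpace ℝ G] {μ : Measure α} {ν : Measure β}
    [SFinite ν] {l : Filter ι} [l.IsCountablyGenerated] {F : ι → α → β → G} {F₀ : α → β → G}
    {g : α → ℝ} {h : β → ℝ} (hF : ∀ i, StronglyMeasurable (Function.uncurry (F i)))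
    (hbound : ∀ᶠ i in l, ∀ x y, ‖F i x y‖ ≤ g x * h y) (hg : Integrable g μ) (hh : Integrable h ν)
    (hlim : ∀ᵐ x ∂μ, ∀ᵐ y ∂ν, Tendsto (fun i => F i x y) l (𝓝 (F₀ x y))) :
    Tendsto (fun i => ∫ x, ∫ y, F i x y ∂ν ∂μ) l (𝓝 (∫ x, ∫ y, F₀ x y ∂ν ∂μ)) := by
  refine tendsto_integral_filter_of_dominated_convergence (fun x => g x * ∫ y, h y ∂ν)
    (.of_forall fun i => (hF i).integral_prod_right'.aestronglyMeasurable) ?_ (hg.mul_const _) ?_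
  · filter_upwards [hbound] with i hi
    refine .of_forall fun x => ?_
    rw [← integral_const_mul]
    exact norm_integral_le_of_norm_le (hh.const_mul _) (.of_forall (hi x))
  · filter_upwards [hlim] with x hx
    exact tendsto_integral_filter_of_dominated_convergence (fun y => g x * h y)
      (.of_forall fun i => ((hF i).comp_measurable measurable_prodMk_left).aestronglyMeasurable)
      (hbound.mono fun i hi => .of_forall (hi x)) (hh.const_mul _) hx

section Limit

variable {E : Type*} [NormedAddCommGroup E] [InnerProductSpace ℝ E]

lemma exists_heatKernel_one_mul_abs_rpow_le {f : E → ℝ} {L : NNReal} (hL : LipschitzWith L f)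
    (hsupp : HasCompactSupport f) {p m : ℝ} (hp : 0 < p) (hm : 0 ≤ m) :
    ∃ C : ℝ, ∀ r, 0 < r → r ≤ 1 → ∀ x z : E,
      heatKernel 1 0 z * |r⁻¹ * (f (x + r • z) - f x)| ^ p ≤
        C * (1 + ‖x‖) ^ (-m) * (1 + ‖z‖) ^ (-m) := by
  obtain ⟨R, hR₀, hR⟩ : ∃ R, 0 < R ∧ tsupport f ⊆ Metric.closedBall 0 R := by
    simpa using hsupp.isCompact.isBounded.subset_closedBall_lt 0 0
  set A := (4 * π * 1) ^ (-(Module.finrank ℝ E : ℝ) / 2) * exp (1 * (p + 2 * m) ^ 2)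
  refine ⟨A * (L ^ p * (1 + R) ^ m), fun r hr hr₁ x z => ?_⟩
  have kernel_le : heatKernel 1 0 z ≤ A * (1 + ‖z‖) ^ (-(p + 2 * m)) := by
    simpa only [zero_sub, norm_neg] using
      heatKernel_le_one_add_norm_rpow one_pos (by positivity : 0 ≤ p + 2 * m) 0 z
  calc heatKernel 1 0 z * |r⁻¹ * (f (x + r • z) - f x)| ^ p
      ≤ A * (1 + ‖z‖) ^ (-(p + 2 * m)) *
          (L ^ p * (1 + R) ^ m * (1 + ‖x‖) ^ (-m) * (1 + ‖z‖) ^ (p + m)) := by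
        gcongr
        exact abs_inv_mul_apply_add_smul_sub_rpow_le hL hR₀.le ((subset_tsupport f).trans hR)
          hp hm hr hr₁ x z
    _ = A * (L ^ p * (1 + R) ^ m) * (1 + ‖x‖) ^ (-m) *
          ((1 + ‖z‖) ^ (-(p + 2 * m)) * (1 + ‖z‖) ^ (p + m)) := by ring
    _ = A * (L ^ p * (1 + R) ^ m) * (1 + ‖x‖) ^ (-m) * (1 + ‖z‖) ^ (-m) := by
        rw [← rpow_add (by positivity)]
        ring_nf

variable [FiniteDimensional ℝ E] [MeasurableSpace E] [BorelSpace E]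

lemma tendsto_integral_heatKernel_one_mul_abs_rpow {f : E → ℝ} {L : NNReal}
    (hL : LipschitzWith L f) (hsupp : HasCompactSupport f) {p : ℝ} (hp : 0 < p) :
    Tendsto (fun r : ℝ => ∫ x, ∫ z, heatKernel 1 0 z * |r⁻¹ * (f (x + r • z) - f x)| ^ p)
      (𝓝[>] 0) (𝓝 (∫ x, ∫ z, heatKernel 1 0 z * |fderiv ℝ f x z| ^ p)) := by
  set m : ℝ := Module.finrank ℝ E + 1
  have weight_integrable : Integrable (fun x : E => (1 + ‖x‖) ^ (-m)) :=
    integrable_one_add_norm (lt_add_one _)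
  obtain ⟨C, hC⟩ := exists_heatKernel_one_mul_abs_rpow_le hL hsupp hp (by positivity : 0 ≤ m)
  refine tendsto_integral_integral_of_norm_le_mul (fun r => ?_) ?_
    (weight_integrable.const_mul C) weight_integrable ?_
  · have kernel_continuous := continuous_heatKernel (E := E) 1 0
    have f_continuous := hL.continuous
    have : Continuous fun q : E × E => |r⁻¹ * (f (q.1 + r • q.2) - f q.1)| ^ p :=
      Continuous.rpow_const (by fun_prop) fun _ => .inr hp.le
    exact ((kernel_continuous.comp continuous_snd).mul this).stronglyMeasurable
  · filter_upwards [Ioc_mem_nhdsGT zero_lt_one] with r ⟨hr, hr₁⟩ x z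
    rw [norm_of_nonneg (mul_nonneg (heatKernel_nonneg zero_le_one 0 z) (by positivity))]
    exact hC r hr hr₁ x z
  · filter_upwards [hL.ae_differentiableAt] with x hx
    refine .of_forall fun z => ?_
    have quotient_tendsto := (hx.hasFDerivAt.hasLineDerivAt z).tendsto_slope_zero_right
    exact (quotient_tendsto.abs.rpow_const (.inr hp.le)).const_mul _

theorem heat_semigroup_limit_smooth_general {f : E → ℝ} {L : NNReal} (hL : LipschitzWith L f)
    (hsupp : HasCompactSupport f) {p : ℝ} (hp : 0 < p) :
    Tendsto (fun t : ℝ => t ^ (-(p / 2)) * ∫ x, ∫ y, heatKernel t x y * |f y - f x| ^ p)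
      (𝓝[>] 0) (𝓝 (2 * Gamma p / Gamma (p / 2) * ∫ x, ‖fderiv ℝ f x‖ ^ p)) := by
  have sqrt_tendsto : Tendsto sqrt (𝓝[>] 0) (𝓝[>] 0) :=
    tendsto_nhdsWithin_iff.mpr ⟨tendsto_nhdsWithin_of_tendsto_nhds
      (by simpa using continuous_sqrt.tendsto 0), by
      filter_upwards [self_mem_nhdsWithin] with t ht using sqrt_pos.mpr ht⟩
  have rescaled :=
    (tendsto_integral_heatKernel_one_mul_abs_rpow hL hsupp hp).comp sqrt_tendsto
  simp_rw [integral_heatKernel_mul_abs_rpow one_pos hp, one_rpow, mul_one, integral_const_mul]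
    at rescaled
  refine rescaled.congr' ?_
  filter_upwards [self_mem_nhdsWithin] with t (ht : 0 < t)
  have scaling : t ^ (-(p / 2)) = (√t)⁻¹ ^ p := by
    rw [inv_rpow (sqrt_nonneg t), ← rpow_neg (sqrt_nonneg t), sqrt_eq_rpow, ← rpow_mul ht.le]
    ring_nf
  simp_rw [Function.comp_apply, integral_heatKernel_mul_eq_heatKernel_one ht,
    ← integral_const_mul, scaling, abs_mul,
    abs_of_nonneg (inv_nonneg.mpr (sqrt_nonneg t)),
    mul_rpow (inv_nonneg.mpr (sqrt_nonneg t)) (abs_nonneg _), mul_left_comm]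

end Limit

theorem heat_semigroup_limit_smooth (n : ℕ) (hn : 1 ≤ n) (p : ℝ) (hp : 1 ≤ p)
    (f : EuclideanSpace ℝ (Fin n) → ℝ) (hf : ContDiff ℝ (⊤ : ℕ∞) f)
    (hsupp : HasCompactSupport f) :
    Tendsto (fun t : ℝ =>
        t ^ (-(p / 2)) *
          ∫ x, ∫ y,
            (4 * π * t) ^ (-(n : ℝ) / 2) * Real.exp (-‖x - y‖ ^ 2 / (4 * t)) *
              |f y - f x| ^ p)
      (𝓝[>] (0 : ℝ))
      (𝓝 (2 * Real.Gamma p / Real.Gamma (p / 2) * ∫ x, ‖fderiv ℝ f x‖ ^ p)) := by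
  obtain ⟨L, hL⟩ := hf.lipschitzWith_of_hasCompactSupport hsupp (by simp)
  simpa only [heatKernel, finrank_euclideanSpace_fin] using
    heat_semigroup_limit_smooth_general hL hsupp (zero_lt_one.trans_le hp)
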